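/- Assume F has characteristic 2, let k ≥ 2, and suppose u ∈ F^{2^k} satisfies u(0) = u(1) = 0 (a Type-III node: the first two positions are frozen, all others arbitrary). Let c be the associated codeword. Then the even-indexed and odd-indexed entries of c each satisfy a parity-check equation weighted by g0inv^{(k−1)}: ∑_{a=0}^{2^{k−1}−1} g0inv^{(k−1)}(a)·c(2a) = 0 and ∑_{a=0}^{2^{k−1}−1} g0inv^{(k−1)}(a)·c(2a+1) = 0. (Paper's Theorem 4.) -/

import Mathlib

open Finset

variable {F : Type*}

/-- Kronecker power of a 2×2 matrix, defined by the binary-digit product formula: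
the `(i,j)` entry of `kron M k` is `∏ t < k, M i_t j_t` where `i_t, j_t` are the
`t`-th binary digits of `i` and `j`. -/
noncomputable def kron [Field F] (M : Matrix (Fin 2) (Fin 2) F) (k : ℕ) :
    Matrix (Fin (2 ^ k)) (Fin (2 ^ k)) F :=
  fun i j => ∏ t ∈ Finset.range k,
    M (if (i : ℕ).testBit t then 1 else 0) (if (j : ℕ).testBit t then 1 else 0)

/-- The 2×2 non-binary polar kernel with rows (μ, 0) and (γ, δ). -/
noncomputable def G2 [Field F] (μ γ δ : F) : Matrix (Fin 2) (Fin 2) F := !![μ, 0; γ, δ]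

/-- `Gk μ γ δ k = G2^{⊗k}`, the k-fold Kronecker power of the kernel. -/
noncomputable def Gk [Field F] (μ γ δ : F) (k : ℕ) : Matrix (Fin (2 ^ k)) (Fin (2 ^ k)) F :=
  kron (G2 μ γ δ) k

/-- `g0inv μ γ δ k` : first column of the inverse of `G2^{⊗k}`. -/
noncomputable def g0inv [Field F] (μ γ δ : F) (k : ℕ) (j : Fin (2 ^ k)) : F :=
  (Gk μ γ δ k)⁻¹ j ⟨0, Nat.two_pow_pos k⟩

/-- `rk μ γ δ k` : last row of `G2^{⊗k}`. -/
noncomputable def rk [Field F] (μ γ δ : F) (k : ℕ) (j : Fin (2 ^ k)) : F :=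
  Gk μ γ δ k ⟨2 ^ k - 1, by have := Nat.two_pow_pos k; omega⟩ j

/-- codeword associated to an input vector `u`: `cᵀ = uᵀ · G2^{⊗k}`. -/
noncomputable def codeword [Field F] (μ γ δ : F) (k : ℕ) (u : Fin (2 ^ k) → F)
    (j : Fin (2 ^ k)) : F :=
  ∑ i, u i * Gk μ γ δ k i j

theorem index_lt {p q n a b : ℕ} (ha : a < q) (hb : b < p) (h : p * q = n) :
    p * a + b < n := by
  subst h
  have h1 : p * a + b < p * (a + 1) := by
    have hm : p * (a + 1) = p * a + p := by ring
    omega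
  have h2 : p * (a + 1) ≤ p * q := Nat.mul_le_mul le_rfl ha
  omega

/-!
Splitting off the lowest binary digit identifies `M^{⊗(k+1)}` with `M^{⊗k} ⊗ M`, so writing the
input `u` as a `2 × 2^k` array `X` with entries `X s a = u (2a + s)` turns the codeword into the
array `Mᵀ X M^{⊗k}`. Multiplying on the right by column `i` of the inverse of `M^{⊗k}` leaves
column `i` of `Mᵀ X`, which depends only on the inputs `u (2i)` and `u (2i + 1)`.
-/

open Matrix Kronecker

theorem sum_inv_mul_vecMul_kronecker {R m n p : Type*} [CommRing R] [Fintype m] [DecidableEq m]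
    [Fintype n] {A : Matrix m m R} (hA : IsUnit A.det) (B : Matrix n p R) (v : m × n → R)
    (i : m) (b : p) :
    ∑ a, A⁻¹ a i * (v ᵥ* (A ⊗ₖ B)) (a, b) = ∑ s, v (i, s) * B s b := by
  let X : Matrix n m R := of fun s a => v (a, s)
  have vecMul_eq : v ᵥ* (A ⊗ₖ B) = vec (Bᵀ * X * A) := vec_vecMul_kronecker B X A
  calc ∑ a, A⁻¹ a i * (v ᵥ* (A ⊗ₖ B)) (a, b)
      = (Bᵀ * X * A * A⁻¹) b i := by
        simp only [vecMul_eq, vec, mul_apply (M := Bᵀ * X * A), mul_comm]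
    _ = (Bᵀ * X) b i := by rw [mul_nonsing_inv_cancel_right A _ hA]
    _ = ∑ s, v (i, s) * B s b := by
        simp only [X, mul_apply, transpose_apply, of_apply, mul_comm]

/-- The indexing of `Fin (2 ^ (k + 1))` by pairs `(a, s) ↦ 2 * a + s`, where `s` is the lowest
binary digit and `a` collects the remaining ones. -/
def lowDigitEquiv (k : ℕ) : Fin (2 ^ k) × Fin 2 ≃ Fin (2 ^ (k + 1)) :=
  finProdFinEquiv

theorem lowDigitEquiv_apply (k : ℕ) (a : Fin (2 ^ k)) (s : Fin 2) :
    lowDigitEquiv k (a, s) = ⟨2 * a + s, index_lt a.isLt s.isLt (pow_succ' 2 k).symm⟩ :=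
  Fin.ext (add_comm _ _)

section Kron

variable [Field F] (M : Matrix (Fin 2) (Fin 2) F) (k : ℕ)

theorem kron_zero : kron M 0 = 1 := by
  ext i j
  obtain rfl : i = j := Subsingleton.elim (α := Fin 1) i j
  simp [kron]

theorem kron_succ_submatrix :
    (kron M (k + 1)).submatrix (lowDigitEquiv k) (lowDigitEquiv k) = kron M k ⊗ₖ M := by
  have testBit_zero (a : ℕ) (s : Fin 2) :
      (if (2 * a + s).testBit 0 then 1 else 0) = s := by
    fin_cases s <;> simp [Nat.testBit_zero]
  have testBit_succ (a t : ℕ) (s : Fin 2) : (2 * a + s).testBit (t + 1) = a.testBit t := by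
    rw [Nat.testBit_succ, show (2 * a + s) / 2 = a by omega]
  ext ⟨i, s⟩ ⟨j, r⟩
  simp only [submatrix_apply, kroneckerMap_apply, kron, lowDigitEquiv_apply, prod_range_succ',
    testBit_zero, testBit_succ]

variable {M}

theorem isUnit_det_kron (hM : IsUnit M.det) : IsUnit (kron M k).det := by
  induction k with
  | zero => simp [kron_zero]
  | succ k ih =>
    rw [← det_submatrix_equiv_self (lowDigitEquiv k), kron_succ_submatrix, det_kronecker]
    exact (ih.pow _).mul (hM.pow _)

theorem sum_kron_inv_mul_vecMul_kron_succ (hM : IsUnit M.det) (u : Fin (2 ^ (k + 1)) → F)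
    (i : Fin (2 ^ k)) (b : Fin 2) :
    ∑ a, (kron M k)⁻¹ a i * (u ᵥ* kron M (k + 1)) (lowDigitEquiv k (a, b)) =
      ∑ s, u (lowDigitEquiv k (i, s)) * M s b := by
  have vecMul_reindex : (u ∘ lowDigitEquiv k) ᵥ* (kron M k ⊗ₖ M) =
      (u ᵥ* kron M (k + 1)) ∘ lowDigitEquiv k := by
    rw [← kron_succ_submatrix, submatrix_vecMul_equiv, Function.comp_assoc,
      Equiv.self_comp_symm, Function.comp_id]
  simpa only [vecMul_reindex, Function.comp_apply] using
    sum_inv_mul_vecMul_kronecker (isUnit_det_kron k hM) M (u ∘ lowDigitEquiv k) i b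

theorem stmt8_general (hM : IsUnit M.det) (u : Fin (2 ^ (k + 1)) → F) (hu0 : u 0 = 0)
    (hu1 : u 1 = 0) (b : Fin 2) :
    ∑ a : Fin (2 ^ k), (kron M k)⁻¹ a ⟨0, Nat.two_pow_pos k⟩ *
      (u ᵥ* kron M (k + 1)) ⟨2 * a + b, index_lt a.isLt b.isLt (pow_succ' 2 k).symm⟩ = 0 := by
  have index_zero : lowDigitEquiv k (⟨0, Nat.two_pow_pos k⟩, 0) = 0 := by
    simp [lowDigitEquiv_apply]
  have index_one : lowDigitEquiv k (⟨0, Nat.two_pow_pos k⟩, 1) = 1 := by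
    simp [lowDigitEquiv_apply, Fin.ext_iff, Nat.mod_eq_of_lt]
  simp only [← lowDigitEquiv_apply, sum_kron_inv_mul_vecMul_kron_succ k hM, Fin.sum_univ_two,
    index_zero, index_one, hu0, hu1, zero_mul, add_zero]

end Kron

/-- Paper's Theorem 4 (Type-III node, with `k = m + 2 ≥ 2`): in characteristic 2, if the
first two input positions are frozen then the even- and odd-indexed entries of the codeword
each satisfy a parity-check equation weighted by `g0inv^{(k−1)}`. -/
theorem stmt8 [Field F] [CharP F 2] (μ γ δ : F) (hμ : μ ≠ 0) (hγ : γ ≠ 0) (hδ : δ ≠ 0)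
    (m : ℕ) (u : Fin (2 ^ (m + 2)) → F) (hu0 : u 0 = 0) (hu1 : u 1 = 0) :
    (∑ a : Fin (2 ^ (m + 1)), g0inv μ γ δ (m + 1) a *
        codeword μ γ δ (m + 2) u
          ⟨2 * (a : ℕ), by have h2 : (2 : ℕ) ^ (m + 2) = 2 ^ (m + 1) * 2 := (by ring); have := a.isLt; omega⟩) = 0 ∧
    (∑ a : Fin (2 ^ (m + 1)), g0inv μ γ δ (m + 1) a *
        codeword μ γ δ (m + 2) u
          ⟨2 * (a : ℕ) + 1, by have h2 : (2 : ℕ) ^ (m + 2) = 2 ^ (m + 1) * 2 := (by ring); have := a.isLt; omega⟩) = 0 := by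
  have hG2 : IsUnit (G2 μ γ δ).det := by simp [G2, hμ, hδ]
  exact ⟨stmt8_general (m + 1) hG2 u hu0 hu1 0, stmt8_general (m + 1) hG2 u hu0 hu1 1⟩
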